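/- arXiv:0811.4230 — 2 statements merged into one kernel-verified Lean document; each statement's English description precedes it below -/
import Mathlib

section
/- Let (X,T) be a topological dynamical system and let {B_n}_{n∈ℕ} be a sequence of non-empty compact subsets of X converging in the Hausdorff metric to the singleton {x_0}, and suppose that for every ε > 0 there exist J ∈ ℕ and N ∈ ℕ such that diam(T^j B_n) < ε whenever j ≥ J and n ≥ N. Let x_n ∈ B_n for each n ∈ ℕ. Then h(T, ⋃_{n=1}^∞ B_n ∪ {x_0}) = max{ sup_{n∈ℕ} h(T,B_n), h(T, {x_0, x_1, x_2, …}) }. If in addition x_0 ∉ B_n for every n ∈ ℕ, then every countable compact subset of ⋃_{n=1}^∞ B_n ∪ {x_0} whose unique limit point is x_0 has topological entropy at most h(T, {x_0, x_1, x_2, …}). -/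
open Filter Set Metric MeasureTheory
open scoped ENNReal Topology

noncomputable section

variable {X Y : Type*}

def IsSep [PseudoMetricSpace X] (T : X → X) (n : ℕ) (ε : ℝ) (E : Set X) : Prop :=
  E.Pairwise fun x y => ∃ i < n, ε < dist (T^[i] x) (T^[i] y)

def sepMaxCard [PseudoMetricSpace X] (T : X → X) (n : ℕ) (ε : ℝ) (K : Set X) : ℝ≥0∞ :=
  ⨆ (E : Finset X) (_ : ↑E ⊆ K ∧ IsSep T n ε (↑E : Set X)), (E.card : ℝ≥0∞)

def sepEnt [PseudoMetricSpace X] (T : X → X) (ε : ℝ) (K : Set X) : EReal :=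
  Filter.atTop.limsup fun n : ℕ => ENNReal.log (sepMaxCard T n ε K) / (n : EReal)

def subEnt [PseudoMetricSpace X] (T : X → X) (K : Set X) : EReal :=
  ⨆ (ε : ℝ) (_ : 0 < ε), sepEnt T ε K

/-- `(X,T)` is lowerable. -/
def Lowerable [PseudoMetricSpace X] (T : X → X) : Prop :=
  ∀ h : EReal, 0 ≤ h → h ≤ subEnt T (univ : Set X) →
    ∃ K : Set X, K.Nonempty ∧ IsCompact K ∧ subEnt T K = h

/-- `(X,T)` is hereditarily lowerable. -/
def HerLowerable [PseudoMetricSpace X] (T : X → X) : Prop :=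
  ∀ K : Set X, K.Nonempty → IsCompact K → ∀ h : EReal, 0 ≤ h → h ≤ subEnt T K →
    ∃ K' : Set X, K' ⊆ K ∧ K'.Nonempty ∧ IsCompact K' ∧ subEnt T K' = h

/-- `(X,T)` is hereditarily uniformly lowerable: the lowering subset can moreover be chosen
with at most one limit (accumulation) point. -/
def HUL [PseudoMetricSpace X] (T : X → X) : Prop :=
  ∀ K : Set X, K.Nonempty → IsCompact K → ∀ h : EReal, 0 ≤ h → h ≤ subEnt T K →
    ∃ K' : Set X, K' ⊆ K ∧ K'.Nonempty ∧ IsCompact K' ∧ subEnt T K' = h ∧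
      {x | AccPt x (𝓟 K')}.Subsingleton

/-- `Φ_ε(x) = {y : d(T^n x, T^n y) ≤ ε for all n ≥ 0}`. -/
def Phi [PseudoMetricSpace X] (T : X → X) (ε : ℝ) (x : X) : Set X :=
  {y | ∀ n : ℕ, dist (T^[n] x) (T^[n] y) ≤ ε}

/-- `h*_T(ε) = sup_x h(T, Φ_ε(x))`. -/
def hStar [PseudoMetricSpace X] (T : X → X) (ε : ℝ) : EReal :=
  ⨆ x : X, subEnt T (Phi T ε x)

/-- `(X,T)` is asymptotically `h`-expansive: `h*_T(ε) → 0` as `ε → 0+`. -/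
def AsympHExpansive [PseudoMetricSpace X] (T : X → X) : Prop :=
  Tendsto (fun ε : ℝ => hStar T ε) (𝓝[>] 0) (𝓝 (0 : EReal))

/-- `T^n` for `n : ℤ`, for a homeomorphism `T`. -/
def iterZ [TopologicalSpace X] (T : X ≃ₜ X) : ℤ → X → X
  | Int.ofNat n => (⇑T)^[n]
  | Int.negSucc n => (⇑T.symm)^[n + 1]

/-- `T` is expansive with expansive constant `δ`. -/
def ExpansiveWith [MetricSpace X] (T : X ≃ₜ X) (δ : ℝ) : Prop :=
  ∀ x y : X, x ≠ y → ∃ n : ℤ, δ < dist (iterZ T n x) (iterZ T n y)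

/-- `K ⪰ 𝒲` : `K` is contained in some member of the family `𝒲`. -/
def Refines (K : Set X) (W : Finset (Set X)) : Prop := ∃ A ∈ W, K ⊆ A

/-- The join `U ∨ V` of two finite covers. -/
def covJoin (U V : Finset (Set X)) : Finset (Set X) :=
  letI := Classical.decEq (Set X)
  (U ×ˢ V).image fun p => p.1 ∩ p.2

/-- `dynCov T U n = U_0^{n-1} = ⋁_{i=0}^{n-1} T^{-i} U` (with `U_0^{-1} = {univ}`). -/
def dynCov (T : X → X) (U : Finset (Set X)) : ℕ → Finset (Set X)
  | 0 => {(univ : Set X)}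
  | n + 1 =>
      letI := Classical.decEq (Set X)
      covJoin (dynCov T U n) (U.image fun A => T^[n] ⁻¹' A)

/-- `n_{T,U}(K)`: `0` if `K ⋠ U`; `+∞` if `T^i K ⪰ U` for all `i`; otherwise the largest `j`
with `T^i K ⪰ U` for all `0 ≤ i ≤ j-1`. -/
def nTU (T : X → X) (U : Finset (Set X)) (K : Set X) : ℕ∞ :=
  ⨆ (j : ℕ) (_ : ∀ i < j, Refines (T^[i] '' K) U), (j : ℕ∞)

/-- `e^{-λ n}` for `n : ℕ∞`, valued in `ℝ≥0∞` (with the conventions `e^{-λ·∞} = 0` for `λ > 0`,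
`= 1` for `λ = 0` and `= ∞` for `λ < 0`). -/
def expWeight (lam : ℝ) (n : ℕ∞) : ℝ≥0∞ :=
  if n = ⊤ then (if 0 < lam then 0 else if lam = 0 then 1 else ⊤)
  else ENNReal.ofReal (Real.exp (-(lam * (n.toNat : ℝ))))

/-- `m_{T,U}(K,λ,k)`: the infimum of `∑_{E ∈ 𝓔} e^{-λ n_{T,U}(E)}` over all countable families
`𝓔` of subsets of `X` with `∪𝓔 ⊇ K` and `E ⪰ U_0^{k-1}` for every `E ∈ 𝓔`. -/
def mTU (T : X → X) (U : Finset (Set X)) (K : Set X) (lam : ℝ) (k : ℕ) : ℝ≥0∞ :=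
  ⨅ (ℰ : Set (Set X)) (_ : ℰ.Countable ∧ K ⊆ ⋃₀ ℰ ∧ ∀ E ∈ ℰ, Refines E (dynCov T U k)),
    ∑' E : ℰ, expWeight lam (nTU T U (E : Set X))

/-- `m_{T,U}(K,λ) = lim_{k→∞} m_{T,U}(K,λ,k)`; since `m_{T,U}(K,λ,k)` is nondecreasing in `k`,
the limit is the supremum. -/
def mTUlim (T : X → X) (U : Finset (Set X)) (K : Set X) (lam : ℝ) : ℝ≥0∞ :=
  ⨆ k : ℕ, mTU T U K lam k

/-- `h^B_U(T,K) = inf {λ : m_{T,U}(K,λ) = 0}`. -/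
def hBU (T : X → X) (U : Finset (Set X)) (K : Set X) : EReal :=
  ⨅ (lam : ℝ) (_ : mTUlim T U K lam = 0), (lam : EReal)

/-- The dimensional entropy `h^B(T,K) = sup_U h^B_U(T,K)`, supremum over finite open covers. -/
def hB [TopologicalSpace X] (T : X → X) (K : Set X) : EReal :=
  ⨆ (U : Finset (Set X)) (_ : (∀ A ∈ U, IsOpen A) ∧ ⋃₀ (↑U : Set (Set X)) = univ),
    hBU T U K

/-- `N(U,K)`: the minimal cardinality of a subfamily of `U` covering `K` (`0` for `K = ∅`,
`∞` if no subfamily covers `K`). -/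
def covCard (U : Finset (Set X)) (K : Set X) : ℝ≥0∞ :=
  ⨅ (V : Finset (Set X)) (_ : V ⊆ U ∧ K ⊆ ⋃₀ (↑V : Set (Set X))), (V.card : ℝ≥0∞)

/-- `h_U(T,K) = limsup_{n→∞} (1/n) log N(U_0^{n-1},K)`. -/
def hCov (T : X → X) (U : Finset (Set X)) (K : Set X) : EReal :=
  Filter.atTop.limsup fun n : ℕ => ENNReal.log (covCard (dynCov T U n) K) / (n : EReal)

/-- Topological entropy of a subset via open covers: `h(T,K) = sup_U h_U(T,K)`. -/
def hCovSup [TopologicalSpace X] (T : X → X) (K : Set X) : EReal :=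
  ⨆ (U : Finset (Set X)) (_ : (∀ A ∈ U, IsOpen A) ∧ ⋃₀ (↑U : Set (Set X)) = univ),
    hCov T U K

/-- The atom of the (finite) partition `P` containing `x`. -/
def atomAt (P : Finset (Set X)) (x : X) : Set X := ⋃₀ {A | A ∈ P ∧ x ∈ A}

/-- `P` is a finite Borel partition. -/
def IsFinPartition [MeasurableSpace X] (P : Finset (Set X)) : Prop :=
  (∀ A ∈ P, MeasurableSet A) ∧ ⋃₀ (↑P : Set (Set X)) = univ ∧
    (↑P : Set (Set X)).Pairwise fun A B => Disjoint A B

/-- The Shannon entropy `H_μ(P) = ∑_{A ∈ P} -μ(A) log μ(A)` of a finite partition. -/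
def partEnt [MeasurableSpace X] (μ : Measure X) (P : Finset (Set X)) : ℝ :=
  ∑ A ∈ P, -((μ A).toReal * Real.log (μ A).toReal)

/-- The measure-theoretic (Kolmogorov–Sinai) entropy `h_μ(T)`: the supremum over finite Borel
partitions `P` of `lim_n (1/n) H_μ(P_0^{n-1})`; by subadditivity this limit is the infimum. -/
def ksEntropy [MeasurableSpace X] (T : X → X) (μ : Measure X) : EReal :=
  ⨆ (P : Finset (Set X)) (_ : IsFinPartition P),
    ⨅ n : ℕ, ((partEnt μ (dynCov T P (n + 1)) / (n + 1) : ℝ) : EReal)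

/-- `π` is a principal factor map from `(X,T)` to `(Y,S)` : `h_μ(T) = h_{πμ}(S)` for every
`T`-invariant Borel probability measure `μ`. -/
def IsPrincipal [MeasurableSpace X] [MeasurableSpace Y] (T : X → X) (S : Y → Y)
    (π : X → Y) : Prop :=
  ∀ μ : Measure X, IsProbabilityMeasure μ → Measure.map T μ = μ →
    ksEntropy T μ = ksEntropy S (Measure.map π μ)

/-- The relative topological entropy `h_top(T,X|π) = sup_{y ∈ Y} h(T, π^{-1}(y))`. -/
def relEnt [PseudoMetricSpace X] (T : X → X) (π : X → Y) : EReal :=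
  ⨆ y : Y, subEnt T (π ⁻¹' {y})

/-- The canonical conversion `EReal → ℝ≥0∞` (`⊥` and negative reals go to `0`). -/
def erealToENNReal (x : EReal) : ℝ≥0∞ := if x = ⊤ then ⊤ else ENNReal.ofReal x.toReal

/-! For large `n` the whole forward orbit of `B n` stays uniformly close to that of `x n`: the
diameter hypothesis controls the late iterates, and the convergence `B n → {x₀}` together with
continuity at `x₀` controls the finitely many early ones. Hence at every scale all but finitely
many of the `B n` are shadowed by `{x n}`, while the finitely many remaining ones contribute at most
the maximum of their entropies, because `subEnt T` turns finite unions into maxima. In the last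
claim `C` meets each `B n` in a finite set, which has zero entropy. -/

section

variable [PseudoMetricSpace X] {T : X → X} {n : ℕ} {ε δ : ℝ} {K L S : Set X}

lemma IsSep.card_le_sepMaxCard {E : Finset X} (hE : IsSep T n ε (E : Set X)) (hEK : ↑E ⊆ K) :
    (E.card : ℝ≥0∞) ≤ sepMaxCard T n ε K :=
  le_iSup₂_of_le E ⟨hEK, hE⟩ le_rfl

lemma sepMaxCard_le_iff {c : ℝ≥0∞} :
    sepMaxCard T n ε K ≤ c ↔
      ∀ E : Finset X, ↑E ⊆ K → IsSep T n ε (E : Set X) → (E.card : ℝ≥0∞) ≤ c := by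
  simp only [sepMaxCard, iSup_le_iff, and_imp]

lemma sepMaxCard_mono (h : K ⊆ L) : sepMaxCard T n ε K ≤ sepMaxCard T n ε L :=
  sepMaxCard_le_iff.2 fun _ hEK hE => hE.card_le_sepMaxCard (hEK.trans h)

lemma sepMaxCard_union_le :
    sepMaxCard T n ε (K ∪ L) ≤ sepMaxCard T n ε K + sepMaxCard T n ε L := by
  classical
  refine sepMaxCard_le_iff.2 fun E hEKL hE => ?_
  have card_inter_le : ((E.filter (· ∈ K)).card : ℝ≥0∞) ≤ sepMaxCard T n ε K := by
    refine IsSep.card_le_sepMaxCard (hE.mono (Finset.coe_subset.2 (E.filter_subset _))) ?_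
    rw [Finset.coe_filter]
    exact fun y hy => hy.2
  have card_sdiff_le : ((E.filter (· ∉ K)).card : ℝ≥0∞) ≤ sepMaxCard T n ε L := by
    refine IsSep.card_le_sepMaxCard (hE.mono (Finset.coe_subset.2 (E.filter_subset _))) ?_
    rw [Finset.coe_filter]
    exact fun y hy => (hEKL hy.1).resolve_left hy.2
  rw [← E.card_filter_add_card_filter_not (· ∈ K), Nat.cast_add]
  exact add_le_add card_inter_le card_sdiff_le

lemma sepMaxCard_empty : sepMaxCard T n ε ∅ = 0 := by
  refine le_antisymm (sepMaxCard_le_iff.2 fun E hE _ => ?_) zero_le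
  simp only [Finset.coe_eq_empty.1 (subset_empty_iff.1 hE), Finset.card_empty, Nat.cast_zero,
    le_refl]

lemma sepMaxCard_singleton (y : X) : sepMaxCard T n ε {y} = 1 := by
  refine le_antisymm (sepMaxCard_le_iff.2 fun E hE _ => ?_) ?_
  · have hEy : E ⊆ {y} := Finset.coe_subset.1 (hE.trans_eq (Finset.coe_singleton y).symm)
    exact_mod_cast Finset.card_le_card hEy
  · have hsep : IsSep T n ε (({y} : Finset X) : Set X) :=
      (Finset.coe_singleton y).symm ▸ pairwise_singleton y _
    simpa only [Finset.card_singleton, Nat.cast_one] using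
      hsep.card_le_sepMaxCard (Finset.coe_singleton y).subset

lemma sepMaxCard_le_of_subset_iUnion_Phi (hε : 0 ≤ ε) (h : K ⊆ ⋃ z ∈ S, Phi T δ z) :
    sepMaxCard T n (δ + ε + δ) K ≤ sepMaxCard T n ε S := by
  classical
  have exists_shadow : ∀ y ∈ K, ∃ z ∈ S, y ∈ Phi T δ z := fun y hy => by
    simpa only [mem_iUnion₂, exists_prop] using h hy
  choose! f hfS hf using exists_shadow
  refine sepMaxCard_le_iff.2 fun E hEK hE => ?_
  have sep_f : ∀ y ∈ E, ∀ z ∈ E, y ≠ z → ∃ i < n, ε < dist (T^[i] (f y)) (T^[i] (f z)) := by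
    intro y hy z hz hyz
    obtain ⟨i, hi, hdist⟩ := hE hy hz hyz
    have hy' : dist (T^[i] y) (T^[i] (f y)) ≤ δ := dist_comm (T^[i] y) _ ▸ hf y (hEK hy) i
    have hz' : dist (T^[i] (f z)) (T^[i] z) ≤ δ := hf z (hEK hz) i
    exact ⟨i, hi, by
      linarith [dist_triangle4 (T^[i] y) (T^[i] (f y)) (T^[i] (f z)) (T^[i] z)]⟩
  have f_injOn : InjOn f E := by
    intro y hy z hz hfyz
    by_contra hyz
    obtain ⟨i, -, hdist⟩ := sep_f y hy z hz hyz
    rw [hfyz, dist_self] at hdist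
    exact hε.not_gt hdist
  have sep_image : IsSep T n ε (E.image f : Set X) := by
    rw [Finset.coe_image]
    exact f_injOn.pairwise_image.2 sep_f
  have image_subset : (E.image f : Set X) ⊆ S := by
    rw [Finset.coe_image]
    exact image_subset_iff.2 fun y hy => hfS y (hEK hy)
  calc (E.card : ℝ≥0∞) = (E.image f).card := by rw [Finset.card_image_of_injOn f_injOn]
    _ ≤ sepMaxCard T n ε S := sep_image.card_le_sepMaxCard image_subset

lemma sepEnt_eq_expGrowthSup :
    sepEnt T ε K = ExpGrowth.expGrowthSup fun n => sepMaxCard T n ε K :=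
  rfl

lemma sepEnt_mono (h : K ⊆ L) : sepEnt T ε K ≤ sepEnt T ε L :=
  ExpGrowth.expGrowthSup_monotone fun _ => sepMaxCard_mono h

lemma sepEnt_union : sepEnt T ε (K ∪ L) = max (sepEnt T ε K) (sepEnt T ε L) := by
  refine le_antisymm ?_ (max_le (sepEnt_mono subset_union_left) (sepEnt_mono subset_union_right))
  simp only [sepEnt_eq_expGrowthSup]
  rw [← ExpGrowth.expGrowthSup_add]
  exact ExpGrowth.expGrowthSup_monotone fun _ => sepMaxCard_union_le

lemma sepEnt_le_of_subset_iUnion_Phi (hε : 0 ≤ ε) (h : K ⊆ ⋃ z ∈ S, Phi T δ z) :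
    sepEnt T (δ + ε + δ) K ≤ sepEnt T ε S :=
  ExpGrowth.expGrowthSup_monotone fun _ => sepMaxCard_le_of_subset_iUnion_Phi hε h

lemma sepEnt_empty : sepEnt T ε ∅ = ⊥ := by
  simp only [sepEnt_eq_expGrowthSup, sepMaxCard_empty]
  exact ExpGrowth.expGrowthSup_zero

lemma sepEnt_singleton (y : X) : sepEnt T ε {y} = 0 := by
  simp only [sepEnt_eq_expGrowthSup, sepMaxCard_singleton]
  exact ExpGrowth.expGrowthSup_const one_ne_zero ENNReal.one_ne_top

lemma sepEnt_le_subEnt (hε : 0 < ε) : sepEnt T ε K ≤ subEnt T K :=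
  le_iSup₂_of_le (f := fun (ε : ℝ) (_ : 0 < ε) => sepEnt T ε K) ε hε le_rfl

lemma subEnt_mono (h : K ⊆ L) : subEnt T K ≤ subEnt T L :=
  iSup₂_mono fun _ _ => sepEnt_mono h

lemma subEnt_union : subEnt T (K ∪ L) = max (subEnt T K) (subEnt T L) := by
  simp only [subEnt, sepEnt_union, iSup_sup_eq]

lemma subEnt_empty : subEnt T ∅ = ⊥ := by
  simp only [subEnt, sepEnt_empty, iSup_bot]

lemma subEnt_singleton (y : X) : subEnt T {y} = 0 := by
  simp only [subEnt, sepEnt_singleton]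
  exact biSup_const (s := Ioi (0 : ℝ)) nonempty_Ioi

lemma subEnt_biUnion {ι : Type*} {s : Set ι} (hs : s.Finite) (A : ι → Set X) :
    subEnt T (⋃ i ∈ s, A i) = ⨆ i ∈ s, subEnt T (A i) := by
  induction s, hs using Set.Finite.induction_on with
  | empty => rw [biUnion_empty, subEnt_empty, iSup_emptyset]
  | insert _ _ ih => rw [biUnion_insert, subEnt_union, ih, iSup_insert]

lemma subEnt_nonpos_of_finite (hK : K.Finite) : subEnt T K ≤ 0 := by
  rw [← biUnion_of_singleton K, subEnt_biUnion hK]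
  exact iSup₂_le fun y _ => (subEnt_singleton y).le

variable {ι : Type*} {A B : ι → Set X} {x : ι → X} {x₀ : X} {l : Filter ι}

lemma subEnt_iUnion_le (h : ∀ ε > 0, ∀ᶠ i in cofinite, A i ⊆ Phi T ε (x i)) :
    subEnt T (⋃ i, A i) ≤ max (⨆ i, subEnt T (A i)) (subEnt T (range x)) := by
  refine iSup₂_le fun ε hε => ?_
  have hε' : 0 < ε / 3 := by positivity
  set s : Set ι := {i | ¬ A i ⊆ Phi T (ε / 3) (x i)}
  have finite_s : s.Finite := h (ε / 3) hε'
  have shadowed : ⋃ i ∈ sᶜ, A i ⊆ ⋃ z ∈ range x, Phi T (ε / 3) z := by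
    rw [biUnion_range]
    exact iUnion₂_subset fun i hi => (not_not.1 hi).trans (subset_iUnion (fun i => Phi T _ (x i)) i)
  calc sepEnt T ε (⋃ i, A i)
      = max (sepEnt T ε (⋃ i ∈ s, A i)) (sepEnt T ε (⋃ i ∈ sᶜ, A i)) := by
        rw [← sepEnt_union, ← biUnion_union, union_compl_self, biUnion_univ]
    _ ≤ max (⨆ i, subEnt T (A i)) (subEnt T (range x)) := max_le_max ?_ ?_
  · calc sepEnt T ε (⋃ i ∈ s, A i) ≤ subEnt T (⋃ i ∈ s, A i) := sepEnt_le_subEnt hε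
      _ = ⨆ i ∈ s, subEnt T (A i) := subEnt_biUnion finite_s A
      _ ≤ ⨆ i, subEnt T (A i) := iSup₂_le fun i _ => le_iSup (fun i => subEnt T (A i)) i
  · calc sepEnt T ε (⋃ i ∈ sᶜ, A i)
        = sepEnt T (ε / 3 + ε / 3 + ε / 3) (⋃ i ∈ sᶜ, A i) := by rw [add_thirds]
      _ ≤ sepEnt T (ε / 3) (range x) := sepEnt_le_of_subset_iUnion_Phi hε'.le shadowed
      _ ≤ subEnt T (range x) := sepEnt_le_subEnt hε'

lemma subEnt_iUnion_eq (h : ∀ ε > 0, ∀ᶠ i in cofinite, A i ⊆ Phi T ε (x i))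
    (hx : ∀ i, x i ∈ A i) :
    subEnt T (⋃ i, A i) = max (⨆ i, subEnt T (A i)) (subEnt T (range x)) := by
  refine (subEnt_iUnion_le h).antisymm (max_le ?_ ?_)
  · exact iSup_le fun i => subEnt_mono (subset_iUnion A i)
  · exact subEnt_mono (range_subset_iff.2 fun i => mem_iUnion_of_mem i (hx i))

lemma subEnt_le_of_finite_inter (h : ∀ ε > 0, ∀ᶠ i in cofinite, A i ⊆ Phi T ε (x i))
    (hK : K ⊆ (⋃ i, A i) ∪ {x₀}) (hfin : ∀ i, (K ∩ A i).Finite) :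
    subEnt T K ≤ subEnt T (insert x₀ (range x)) := by
  have inter_shadowed : ∀ ε > 0, ∀ᶠ i in cofinite, K ∩ A i ⊆ Phi T ε (x i) := fun ε hε =>
    (h ε hε).mono fun _ hi => inter_subset_right.trans hi
  have K_subset : K ⊆ {x₀} ∪ ⋃ i, K ∩ A i := by
    rw [← inter_iUnion]
    exact fun y hy => (hK hy).elim (fun hyA => Or.inr ⟨hy, hyA⟩) Or.inl
  have iSup_le_singleton : ⨆ i, subEnt T (K ∩ A i) ≤ subEnt T {x₀} :=
    iSup_le fun i => (subEnt_nonpos_of_finite (hfin i)).trans_eq (subEnt_singleton x₀).symm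
  calc subEnt T K
      ≤ max (subEnt T {x₀}) (subEnt T (⋃ i, K ∩ A i)) :=
        (subEnt_mono K_subset).trans_eq subEnt_union
    _ ≤ max (subEnt T {x₀}) (max (⨆ i, subEnt T (K ∩ A i)) (subEnt T (range x))) :=
        max_le_max_left _ (subEnt_iUnion_le inter_shadowed)
    _ ≤ max (subEnt T {x₀}) (subEnt T (range x)) :=
        max_le (le_max_left _ _) (max_le_max_right _ iSup_le_singleton)
    _ = subEnt T (insert x₀ (range x)) := by rw [insert_eq, subEnt_union]

lemma tendsto_smallSets_of_tendsto_hausdorffDist (hBne : ∀ i, (B i).Nonempty)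
    (hB : ∀ i, Bornology.IsBounded (B i))
    (hconv : Tendsto (fun i => hausdorffDist (B i) {x₀}) l (𝓝 0)) :
    Tendsto B l (𝓝 x₀).smallSets := by
  refine nhds_basis_ball.smallSets.tendsto_right_iff.2 fun r hr => ?_
  filter_upwards [hconv.eventually_lt_const hr] with i hi y hy
  have hfin : hausdorffEDist (B i) {x₀} ≠ ⊤ :=
    hausdorffEDist_ne_top_of_nonempty_of_bounded (hBne i) (singleton_nonempty _) (hB i)
      Bornology.isBounded_singleton
  rw [mem_ball, ← infDist_singleton]
  exact (infDist_le_hausdorffDist_of_mem hy hfin).trans_lt hi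

lemma eventually_subset_Phi (hT : Continuous T) (hB : ∀ i, IsCompact (B i))
    (hconv : Tendsto B l (𝓝 x₀).smallSets) {J : ℕ} (hε : 0 < ε)
    (hdiam : ∀ᶠ i in l, ∀ j ≥ J, diam (T^[j] '' B i) ≤ ε) (hx : ∀ i, x i ∈ B i) :
    ∀ᶠ i in l, B i ⊆ Phi T ε (x i) := by
  have early : ∀ᶠ y in 𝓝 x₀, ∀ j < J, dist (T^[j] y) (T^[j] x₀) < ε / 2 :=
    (finite_lt_nat J).eventually_all.2 fun j _ =>
      (hT.iterate j).continuousAt.eventually (ball_mem_nhds _ (half_pos hε))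
  filter_upwards [hconv.eventually early.smallSets, hdiam] with i hearly hlate y hy j
  rcases lt_or_ge j J with hj | hj
  · calc dist (T^[j] (x i)) (T^[j] y)
        ≤ dist (T^[j] (x i)) (T^[j] x₀) + dist (T^[j] y) (T^[j] x₀) := dist_triangle_right _ _ _
      _ ≤ ε / 2 + ε / 2 := add_le_add (hearly _ (hx i) j hj).le (hearly y hy j hj).le
      _ = ε := add_halves ε
  · have hbdd : Bornology.IsBounded (T^[j] '' B i) := ((hB i).image (hT.iterate j)).isBounded
    exact (dist_le_diam_of_mem hbdd (mem_image_of_mem _ (hx i)) (mem_image_of_mem _ hy)).trans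
      (hlate j hj)

end

lemma finite_inter_of_not_accPt [TopologicalSpace X] {C K : Set X} (hK : IsCompact K)
    (h : ∀ y ∈ K, ¬ AccPt y (𝓟 C)) : (C ∩ K).Finite := by
  by_contra hinf
  obtain ⟨y, hyK, hy⟩ :=
    Set.Infinite.exists_accPt_of_subset_isCompact hinf hK inter_subset_right
  exact h y hyK (hy.mono (principal_mono.2 inter_subset_left))

theorem entropy_of_union_shrinking_general [PseudoMetricSpace X] {T : X → X} (hT : Continuous T)
    {B : ℕ → Set X} (hBc : ∀ n, IsCompact (B n)) {x₀ : X}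
    (hconv : Tendsto (fun n => hausdorffDist (B n) {x₀}) atTop (𝓝 0))
    (hdiam : ∀ ε : ℝ, 0 < ε → ∃ J N : ℕ, ∀ j ≥ J, ∀ n ≥ N, diam (T^[j] '' B n) < ε)
    {x : ℕ → X} (hx : ∀ n, x n ∈ B n) :
    subEnt T ((⋃ n, B n) ∪ {x₀}) =
      max (⨆ n, subEnt T (B n)) (subEnt T (insert x₀ (range x))) ∧
    ((∀ n, x₀ ∉ B n) → ∀ C : Set X, C ⊆ (⋃ n, B n) ∪ {x₀} → {y | AccPt y (𝓟 C)} ⊆ {x₀} →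
        subEnt T C ≤ subEnt T (insert x₀ (range x))) := by
  have shrink : Tendsto B atTop (𝓝 x₀).smallSets :=
    tendsto_smallSets_of_tendsto_hausdorffDist (fun n => ⟨x n, hx n⟩)
      (fun n => (hBc n).isBounded) hconv
  have shadow : ∀ ε > 0, ∀ᶠ n in cofinite, B n ⊆ Phi T ε (x n) := fun ε hε => by
    obtain ⟨J, N, hJN⟩ := hdiam ε hε
    rw [Nat.cofinite_eq_atTop]
    exact eventually_subset_Phi hT hBc shrink hε
      (eventually_atTop.2 ⟨N, fun n hn j hj => (hJN j hj n hn).le⟩) hx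
  refine ⟨?_, fun hx₀ C hC hacc => subEnt_le_of_finite_inter shadow hC fun n => ?_⟩
  · rw [insert_eq, subEnt_union, subEnt_union, subEnt_iUnion_eq shadow hx, max_assoc,
      max_comm (subEnt T (range x))]
  · exact finite_inter_of_not_accPt (hBc n) fun y hy hyC => hx₀ n (hacc hyC ▸ hy)

/-- Entropy of a union of compacta shrinking to a point: if `B n → {x₀}` in
the Hausdorff metric and the forward images `T^j B_n` have uniformly small diameters
(eventually in `j` and `n`), then for any choice `x n ∈ B n`,
`h(T, ⋃ₙ Bₙ ∪ {x₀}) = max (supₙ h(T,Bₙ)) (h(T,{x₀,x₁,x₂,…}))`; and if moreover `x₀ ∉ Bₙ`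
for all `n`, then any countable compact subset of `⋃ₙ Bₙ ∪ {x₀}` whose unique limit point
is `x₀` has entropy at most `h(T,{x₀,x₁,x₂,…})`. -/
theorem entropy_of_union_shrinking {X : Type*} [MetricSpace X] [CompactSpace X] (T : X ≃ₜ X)
    (B : ℕ → Set X) (hBne : ∀ n, (B n).Nonempty) (hBc : ∀ n, IsCompact (B n)) (x₀ : X)
    (hconv : Tendsto (fun n => hausdorffDist (B n) {x₀}) atTop (𝓝 0))
    (hdiam : ∀ ε : ℝ, 0 < ε → ∃ J N : ℕ, ∀ j ≥ J, ∀ n ≥ N, diam ((⇑T)^[j] '' B n) < ε)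
    (x : ℕ → X) (hx : ∀ n, x n ∈ B n) :
    subEnt (⇑T) ((⋃ n, B n) ∪ {x₀}) =
      max (⨆ n, subEnt (⇑T) (B n)) (subEnt (⇑T) (insert x₀ (range x))) ∧
    ((∀ n, x₀ ∉ B n) → ∀ C : Set X, C ⊆ (⋃ n, B n) ∪ {x₀} → C.Countable → IsCompact C →
      {y | AccPt y (𝓟 C)} = {x₀} →
        subEnt (⇑T) C ≤ subEnt (⇑T) (insert x₀ (range x))) :=
  (entropy_of_union_shrinking_general T.continuous hBc hconv hdiam hx).imp_right
    fun h hx₀ C hC _ _ hacc => h hx₀ C hC hacc.subset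
end
end

section
/- (Non-Uniform Mass Distribution Principle.) Let (X,T) be a general topological dynamical system, d > 0, M ∈ ℕ, Z ⊆ X, α a finite Borel partition of X, U a finite Borel cover of X, and θ a Borel probability measure on X. Assume that each element of U has non-empty intersection with at most M elements of α. Suppose there exists Z_θ ⊆ Z with positive outer θ-measure θ*(Z_θ) > 0 such that for every x ∈ Z_θ there is c(x) > 0 with θ(α_0^{n−1}(x)) ≤ c(x) e^{−n d} for all n ∈ ℕ. Then h^B_U(T,Z) ≥ d − log M. In particular, h^B_α(T,Z) ≥ d. -/
open Filter Set Metric MeasureTheory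
open scoped ENNReal Topology

noncomputable section

variable {X Y : Type*}

/-!
Let `W_N` be the set of points `x` with `θ (α_0^{n-1}(x)) ≤ N e^{-nd}` for all `n ≥ 1`. These sets
exhaust `Z_θ`, so one of them has positive outer measure. A set `E` with `n_{T,U}(E) ≥ n` lies in a
member of `U_0^{n-1}`, which meets at most `M^n` members of `α_0^{n-1}`; hence
`θ (E ∩ W_N) ≤ N M^n e^{-nd} = N e^{-n(d - log M)}`. Summing over an admissible cover of `Z`
bounds `m_{T,U}(Z, d - log M)` below by `θ (Z ∩ W_N) / N > 0`.
-/

section DynCov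

variable {T : X → X} {U : Finset (Set X)} {E : Set X} {n : ℕ}

theorem mem_dynCov_succ {C : Set X} :
    C ∈ dynCov T U (n + 1) ↔ ∃ A ∈ dynCov T U n, ∃ B ∈ U, A ∩ T^[n] ⁻¹' B = C := by
  simp [dynCov, covJoin, and_assoc]

theorem sUnion_dynCov (T : X → X) (hU : ⋃₀ (↑U : Set (Set X)) = univ) (n : ℕ) :
    ⋃₀ (↑(dynCov T U n) : Set (Set X)) = univ := by
  induction n with
  | zero => simp [dynCov]
  | succ n ih =>
    refine sUnion_eq_univ_iff.2 fun x => ?_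
    obtain ⟨A, hA, hxA⟩ := sUnion_eq_univ_iff.1 ih x
    obtain ⟨B, hB, hxB⟩ := sUnion_eq_univ_iff.1 hU (T^[n] x)
    exact ⟨A ∩ T^[n] ⁻¹' B, mem_dynCov_succ.2 ⟨A, hA, B, hB, rfl⟩, hxA, hxB⟩

theorem refines_dynCov_iff :
    Refines E (dynCov T U n) ↔ ∀ i < n, Refines (T^[i] '' E) U := by
  induction n with
  | zero => simp [dynCov, Refines]
  | succ n ih =>
    rw [Nat.forall_lt_succ_right, ← ih]
    constructor
    · rintro ⟨C, hC, hEC⟩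
      obtain ⟨A, hA, B, hB, rfl⟩ := mem_dynCov_succ.1 hC
      exact ⟨⟨A, hA, hEC.trans inter_subset_left⟩,
        B, hB, image_subset_iff.2 (hEC.trans inter_subset_right)⟩
    · rintro ⟨⟨A, hA, hEA⟩, B, hB, hEB⟩
      exact ⟨_, mem_dynCov_succ.2 ⟨A, hA, B, hB, rfl⟩,
        subset_inter hEA (image_subset_iff.1 hEB)⟩

theorem natCast_le_nTU_iff : (n : ℕ∞) ≤ nTU T U E ↔ Refines E (dynCov T U n) := by
  rw [refines_dynCov_iff]
  constructor
  · intro hn i hi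
    have hlt : (i : ℕ∞) < nTU T U E := (Nat.cast_lt.2 hi).trans_le hn
    simp only [nTU, lt_iSup_iff, Nat.cast_lt] at hlt
    obtain ⟨j, hj, hij⟩ := hlt
    exact hj i hij
  · exact le_iSup₂ (f := fun (j : ℕ) (_ : ∀ i < j, Refines (T^[i] '' E) U) => (j : ℕ∞)) n

end DynCov

section MembersMeeting

/-- The members of the family `α` that meet `A`; the hypothesis of the mass distribution principle
bounds their number for each `A ∈ U`. -/
def membersMeeting (α : Finset (Set X)) (A : Set X) : Set (Set X) :=
  {B ∈ (↑α : Set (Set X)) | (A ∩ B).Nonempty}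

variable {α U : Finset (Set X)}

theorem finite_membersMeeting (α : Finset (Set X)) (A : Set X) : (membersMeeting α A).Finite :=
  α.finite_toSet.subset (sep_subset _ _)

theorem membersMeeting_mono {A A' : Set X} (h : A ⊆ A') :
    membersMeeting α A ⊆ membersMeeting α A' :=
  fun _ hB => ⟨hB.1, hB.2.mono (inter_subset_inter_left _ h)⟩

theorem ncard_membersMeeting_le_one {A : Set X}
    (hα : (↑α : Set (Set X)).Pairwise fun A B => Disjoint A B) (hA : A ∈ α) :
    (membersMeeting α A).ncard ≤ 1 := by
  have hsub : membersMeeting α A ⊆ {A} := fun B hB =>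
    (hα.eq hA hB.1 (not_disjoint_iff_nonempty_inter.2 hB.2)).symm
  simpa using ncard_le_ncard hsub

theorem membersMeeting_dynCov_succ_subset (T : X → X) (n : ℕ) (A B : Set X) :
    membersMeeting (dynCov T α (n + 1)) (A ∩ T^[n] ⁻¹' B) ⊆
      image2 (fun P Q => P ∩ T^[n] ⁻¹' Q) (membersMeeting (dynCov T α n) A)
        (membersMeeting α B) := by
  rintro C ⟨hC, x, ⟨hxA, hxB⟩, hxC⟩
  obtain ⟨P, hP, Q, hQ, rfl⟩ := mem_dynCov_succ.1 hC
  exact ⟨P, ⟨hP, x, hxA, hxC.1⟩, Q, ⟨hQ, T^[n] x, hxB, hxC.2⟩, rfl⟩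

theorem ncard_membersMeeting_dynCov_le {T : X → X} {M n : ℕ} {A : Set X}
    (hU : ∀ A ∈ U, (membersMeeting α A).ncard ≤ M) (hA : A ∈ dynCov T U n) :
    (membersMeeting (dynCov T α n) A).ncard ≤ M ^ n := by
  induction n generalizing A with
  | zero =>
    calc (membersMeeting (dynCov T α 0) A).ncard
        ≤ (↑(dynCov T α 0) : Set (Set X)).ncard :=
          ncard_le_ncard (sep_subset _ _) (Finset.finite_toSet _)
      _ = M ^ 0 := by simp [dynCov]
  | succ n ih =>
    obtain ⟨P, hP, B, hB, rfl⟩ := mem_dynCov_succ.1 hA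
    have hfin := (finite_membersMeeting (dynCov T α n) P).prod (finite_membersMeeting α B)
    calc (membersMeeting (dynCov T α (n + 1)) (P ∩ T^[n] ⁻¹' B)).ncard
        ≤ (image2 (fun C D => C ∩ T^[n] ⁻¹' D) (membersMeeting (dynCov T α n) P)
            (membersMeeting α B)).ncard :=
          ncard_le_ncard (membersMeeting_dynCov_succ_subset T n P B)
            ((finite_membersMeeting _ P).image2 _ (finite_membersMeeting α B))
      _ ≤ (membersMeeting (dynCov T α n) P ×ˢ membersMeeting α B).ncard := by
          rw [← image_prod]
          exact ncard_image_le hfin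
      _ = (membersMeeting (dynCov T α n) P).ncard * (membersMeeting α B).ncard := ncard_prod
      _ ≤ M ^ n * M := Nat.mul_le_mul (ih hP) (hU B hB)
      _ = M ^ (n + 1) := (pow_succ M n).symm

theorem measure_inter_le_ncard_membersMeeting_mul {F : Type*} [FunLike F (Set X) ℝ≥0∞]
    [OuterMeasureClass F X] (θ : F) (hα : ⋃₀ (↑α : Set (Set X)) = univ) {W : Set X} {b : ℝ≥0∞}
    (hW : ∀ x ∈ W, θ (atomAt α x) ≤ b) (A : Set X) :
    θ (A ∩ W) ≤ (membersMeeting α A).ncard * b := by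
  have hfin := finite_membersMeeting α A
  have hsub : A ∩ W ⊆ ⋃ B ∈ hfin.toFinset, B ∩ W := by
    rintro x ⟨hxA, hxW⟩
    obtain ⟨B, hB, hxB⟩ := sUnion_eq_univ_iff.1 hα x
    exact mem_iUnion₂.2 ⟨B, hfin.mem_toFinset.2 ⟨hB, x, hxA, hxB⟩, hxB, hxW⟩
  have hmember : ∀ B ∈ hfin.toFinset, θ (B ∩ W) ≤ b := by
    intro B hB
    rcases (B ∩ W).eq_empty_or_nonempty with hempty | ⟨x, hxB, hxW⟩
    · simp [hempty]
    · have hBatom : B ⊆ atomAt α x := subset_sUnion_of_mem ⟨(hfin.mem_toFinset.1 hB).1, hxB⟩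
      exact (measure_mono (inter_subset_left.trans hBatom)).trans (hW x hxW)
  calc θ (A ∩ W) ≤ θ (⋃ B ∈ hfin.toFinset, B ∩ W) := measure_mono hsub
    _ ≤ ∑ B ∈ hfin.toFinset, θ (B ∩ W) := measure_biUnion_finset_le _ _
    _ ≤ hfin.toFinset.card • b := Finset.sum_le_card_nsmul _ _ _ hmember
    _ = (membersMeeting α A).ncard * b := by rw [nsmul_eq_mul, ncard_eq_toFinset_card _ hfin]

end MembersMeeting

section ExpWeight

theorem expWeight_natCast (lam : ℝ) (n : ℕ) :
    expWeight lam n = ENNReal.ofReal (Real.exp (-(lam * n))) := by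
  simp [expWeight]

theorem tendsto_expWeight_natCast (lam : ℝ) :
    Tendsto (fun n : ℕ => expWeight lam n) atTop (𝓝 (expWeight lam ⊤)) := by
  simp only [expWeight_natCast]
  rcases lt_trichotomy lam 0 with hneg | rfl | hpos
  · have hexp : Tendsto (fun n : ℕ => Real.exp (-(lam * n))) atTop atTop := by
      simp only [← neg_mul]
      exact Real.tendsto_exp_atTop.comp
        (tendsto_natCast_atTop_atTop.const_mul_atTop (neg_pos.2 hneg))
    have htop : expWeight lam ⊤ = ⊤ := by simp [expWeight, hneg.not_gt, hneg.ne]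
    exact htop ▸ ENNReal.tendsto_ofReal_atTop.comp hexp
  · simp [expWeight]
  · have hexp : Tendsto (fun n : ℕ => Real.exp (-(lam * n))) atTop (𝓝 0) :=
      Real.tendsto_exp_neg_atTop_nhds_zero.comp
        (tendsto_natCast_atTop_atTop.const_mul_atTop hpos)
    simpa [expWeight, hpos] using ENNReal.tendsto_ofReal hexp

theorem expWeight_antitone (n : ℕ∞) : Antitone fun lam => expWeight lam n := by
  intro lam lam' h
  have hnat (k : ℕ) : expWeight lam' k ≤ expWeight lam k := by
    simp only [expWeight_natCast]
    gcongr
  induction n with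
  | top =>
    exact le_of_tendsto_of_tendsto' (tendsto_expWeight_natCast lam')
      (tendsto_expWeight_natCast lam) hnat
  | coe k => exact hnat k

theorem natCast_pow_mul_expWeight {M : ℕ} (hM : 0 < M) (d : ℝ) (n : ℕ) :
    (M : ℝ≥0∞) ^ n * expWeight d n = expWeight (d - Real.log M) n := by
  have hpow : (M : ℝ) ^ n = Real.exp (n * Real.log M) := by
    rw [Real.exp_nat_mul, Real.exp_log (Nat.cast_pos.2 hM)]
  rw [expWeight_natCast, expWeight_natCast, ← ENNReal.ofReal_natCast M,
    ← ENNReal.ofReal_pow (Nat.cast_nonneg M), ← ENNReal.ofReal_mul (by positivity), hpow,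
    ← Real.exp_add]
  ring_nf

end ExpWeight

section Entropy

variable {T : X → X} {U : Finset (Set X)} {K : Set X}

theorem mTUlim_antitone : Antitone (mTUlim T U K) := fun _ _ h =>
  iSup_mono fun _ => iInf₂_mono fun _ _ => ENNReal.tsum_le_tsum fun _ => expWeight_antitone _ h

theorem le_hBU_of_mTUlim_ne_zero {s : ℝ} (hs : mTUlim T U K s ≠ 0) : (s : EReal) ≤ hBU T U K := by
  refine le_iInf₂ fun lam hlam => EReal.coe_le_coe_iff.2 ?_
  by_contra! hlt
  exact hs (le_bot_iff.1 ((mTUlim_antitone hlt.le).trans_eq hlam))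

end Entropy

section MassDistribution

variable {F : Type*} [FunLike F (Set X) ℝ≥0∞]

/-- The points around which `θ` decays at rate `d` with constant `c` along the atoms of
`α_0^{n-1}`, `n ≥ 1`. On such a set the non-uniform bound of the mass distribution principle is
uniform. -/
def decaySet (θ : F) (T : X → X) (α : Finset (Set X)) (d c : ℝ) : Set X :=
  {x | ∀ n : ℕ, 0 < n →
    θ (atomAt (dynCov T α n) x) ≤ ENNReal.ofReal (c * Real.exp (-(n * d)))}

variable {θ : F} {T : X → X} {α U : Finset (Set X)} {d c : ℝ}

theorem decaySet_mono : Monotone (decaySet θ T α d) := by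
  intro c c' hc x hx n hn
  refine (hx n hn).trans (ENNReal.ofReal_le_ofReal ?_)
  gcongr

theorem measure_atomAt_le_of_mem_decaySet {x : X} (hx : x ∈ decaySet θ T α d c) {n : ℕ}
    (hn : 0 < n) : θ (atomAt (dynCov T α n) x) ≤ ENNReal.ofReal c * expWeight d n := by
  rw [expWeight_natCast, ← ENNReal.ofReal_mul' (Real.exp_nonneg _), mul_comm d]
  exact hx n hn

variable [OuterMeasureClass F X]

theorem exists_measure_inter_decaySet_ne_zero {Z : Set X} (hZ : θ Z ≠ 0)
    (hdecay : ∀ x ∈ Z, ∃ c, x ∈ decaySet θ T α d c) :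
    ∃ N : ℕ, θ (Z ∩ decaySet θ T α d N) ≠ 0 := by
  by_contra! hnull
  refine hZ (measure_mono_null (fun x hx => ?_) (measure_iUnion_null hnull))
  obtain ⟨c, hc⟩ := hdecay x hx
  obtain ⟨N, hN⟩ := exists_nat_ge c
  exact mem_iUnion.2 ⟨N, hx, decaySet_mono hN hc⟩

variable {M : ℕ}

theorem measure_inter_decaySet_le_of_refines (hM : 0 < M)
    (hα : ⋃₀ (↑α : Set (Set X)) = univ) (hU : ∀ A ∈ U, (membersMeeting α A).ncard ≤ M)
    {E : Set X} {n : ℕ} (hn : 0 < n) (hE : Refines E (dynCov T U n)) :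
    θ (E ∩ decaySet θ T α d c) ≤ ENNReal.ofReal c * expWeight (d - Real.log M) n := by
  obtain ⟨A, hA, hEA⟩ := hE
  have hcard : (membersMeeting (dynCov T α n) E).ncard ≤ M ^ n :=
    (ncard_le_ncard (membersMeeting_mono hEA) (finite_membersMeeting _ A)).trans
      (ncard_membersMeeting_dynCov_le hU hA)
  calc θ (E ∩ decaySet θ T α d c)
      ≤ (membersMeeting (dynCov T α n) E).ncard * (ENNReal.ofReal c * expWeight d n) :=
        measure_inter_le_ncard_membersMeeting_mul θ (sUnion_dynCov T hα n)
          (fun _ hx => measure_atomAt_le_of_mem_decaySet hx hn) E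
    _ ≤ (M : ℝ≥0∞) ^ n * (ENNReal.ofReal c * expWeight d n) := by
        gcongr
        exact_mod_cast hcard
    _ = ENNReal.ofReal c * expWeight (d - Real.log M) n := by
        rw [mul_left_comm, natCast_pow_mul_expWeight hM]

theorem measure_inter_decaySet_le_expWeight_nTU (hM : 0 < M)
    (hα : ⋃₀ (↑α : Set (Set X)) = univ) (hU : ∀ A ∈ U, (membersMeeting α A).ncard ≤ M)
    {E : Set X} (hE : 0 < nTU T U E) :
    θ (E ∩ decaySet θ T α d c) ≤
      ENNReal.ofReal c * expWeight (d - Real.log M) (nTU T U E) := by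
  have hle (n : ℕ) (hn : 0 < n) (hnE : (n : ℕ∞) ≤ nTU T U E) :=
    measure_inter_decaySet_le_of_refines (θ := θ) (d := d) (c := c) hM hα hU hn
      (natCast_le_nTU_iff.1 hnE)
  generalize nTU T U E = m at hE hle ⊢
  induction m with
  | top =>
    refine ge_of_tendsto (ENNReal.Tendsto.const_mul (tendsto_expWeight_natCast _)
      (Or.inr ENNReal.ofReal_ne_top)) ?_
    filter_upwards [eventually_gt_atTop 0] with n hn using hle n hn le_top
  | coe n => exact hle n (Nat.cast_pos.1 hE) le_rfl

theorem measure_inter_decaySet_div_le_mTU (hM : 0 < M)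
    (hα : ⋃₀ (↑α : Set (Set X)) = univ) (hU : ∀ A ∈ U, (membersMeeting α A).ncard ≤ M)
    (Z : Set X) {k : ℕ} (hk : 0 < k) :
    θ (Z ∩ decaySet θ T α d c) / ENNReal.ofReal c ≤ mTU T U Z (d - Real.log M) k := by
  refine le_iInf₂ fun ℰ ⟨hcount, hcover, hrefines⟩ => ENNReal.div_le_of_le_mul' ?_
  have : Countable ℰ := hcount.to_subtype
  have hsub : Z ∩ decaySet θ T α d c ⊆ ⋃ E : ℰ, (E : Set X) ∩ decaySet θ T α d c := by
    rw [← iUnion_inter, ← sUnion_eq_iUnion]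
    exact inter_subset_inter_left _ hcover
  have hpos (E : ℰ) : 0 < nTU T U (E : Set X) :=
    (Nat.cast_pos.2 hk).trans_le (natCast_le_nTU_iff.2 (hrefines E E.2))
  calc θ (Z ∩ decaySet θ T α d c)
      ≤ θ (⋃ E : ℰ, (E : Set X) ∩ decaySet θ T α d c) := measure_mono hsub
    _ ≤ ∑' E : ℰ, θ ((E : Set X) ∩ decaySet θ T α d c) := measure_iUnion_le _
    _ ≤ ∑' E : ℰ, ENNReal.ofReal c * expWeight (d - Real.log M) (nTU T U (E : Set X)) :=
        ENNReal.tsum_le_tsum fun E => measure_inter_decaySet_le_expWeight_nTU hM hα hU (hpos E)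
    _ = ENNReal.ofReal c * ∑' E : ℰ, expWeight (d - Real.log M) (nTU T U (E : Set X)) :=
        ENNReal.tsum_mul_left

theorem nonuniform_mass_distribution_general (hM : 0 < M) {Z Zθ : Set X}
    (hα : ⋃₀ (↑α : Set (Set X)) = univ)
    (hint : ∀ A ∈ U, {B ∈ (↑α : Set (Set X)) | (A ∩ B).Nonempty}.ncard ≤ M)
    (hZθ : Zθ ⊆ Z) (hZθpos : 0 < θ Zθ)
    (hsmall : ∀ x ∈ Zθ, ∃ c : ℝ, ∀ n : ℕ, 0 < n →
      θ (atomAt (dynCov T α n) x) ≤ ENNReal.ofReal (c * Real.exp (-(n * d)))) :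
    ((d - Real.log M : ℝ) : EReal) ≤ hBU T U Z := by
  obtain ⟨N, hN⟩ := exists_measure_inter_decaySet_ne_zero hZθpos.ne' hsmall
  have hNZ : θ (Z ∩ decaySet θ T α d N) ≠ 0 :=
    fun h => hN (measure_mono_null (inter_subset_inter_left _ hZθ) h)
  have hpos : 0 < θ (Z ∩ decaySet θ T α d N) / ENNReal.ofReal N :=
    ENNReal.div_pos hNZ ENNReal.ofReal_ne_top
  have hle : θ (Z ∩ decaySet θ T α d N) / ENNReal.ofReal N ≤ mTUlim T U Z (d - Real.log M) :=
    (measure_inter_decaySet_div_le_mTU hM hα hint Z one_pos).trans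
      (le_iSup (mTU T U Z (d - Real.log M)) 1)
  exact le_hBU_of_mTUlim_ne_zero (hpos.trans_le hle).ne'

end MassDistribution

/-- Non-Uniform Mass Distribution Principle. -/
theorem nonuniform_mass_distribution {X : Type*} [MetricSpace X] [CompactSpace X]
    [MeasurableSpace X] [BorelSpace X]
    (T : X → X) (hT : Continuous T) (d : ℝ) (hd : 0 < d) (M : ℕ) (hM : 0 < M)
    (Z : Set X) (α : Finset (Set X)) (hα : IsFinPartition α)
    (U : Finset (Set X)) (hUm : ∀ A ∈ U, MeasurableSet A)
    (hUc : ⋃₀ (↑U : Set (Set X)) = univ)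
    (hint : ∀ A ∈ U, {B ∈ (↑α : Set (Set X)) | (A ∩ B).Nonempty}.ncard ≤ M)
    (θ : Measure X) [IsProbabilityMeasure θ] (Zθ : Set X) (hZθ : Zθ ⊆ Z)
    (hZθpos : 0 < θ Zθ)
    (hsmall : ∀ x ∈ Zθ, ∃ c : ℝ, 0 < c ∧ ∀ n : ℕ, 0 < n →
      θ (atomAt (dynCov T α n) x) ≤ ENNReal.ofReal (c * Real.exp (-(n * d)))) :
    ((d - Real.log M : ℝ) : EReal) ≤ hBU T U Z ∧ ((d : ℝ) : EReal) ≤ hBU T α Z := by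
  have hdecay : ∀ x ∈ Zθ, ∃ c : ℝ, x ∈ decaySet θ T α d c :=
    fun x hx => (hsmall x hx).imp fun _ => And.right
  have hself : ∀ A ∈ α, (membersMeeting α A).ncard ≤ 1 :=
    fun _ hA => ncard_membersMeeting_le_one hα.2.2 hA
  exact ⟨nonuniform_mass_distribution_general hM hα.2.1 hint hZθ hZθpos hdecay, by
    simpa using nonuniform_mass_distribution_general one_pos hα.2.1 hself hZθ hZθpos hdecay⟩
end
end
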